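/- Let p be an odd prime, q = p^{2e}, and let n satisfy 1 ≤ n ≤ q and p | n. The number of n-element subsets {x_1,...,x_n} of F_q satisfying x_1 + ... + x_n = 0 and x_1^2 + ... + x_n^2 = 0 equals (1/q^2) C(q,n) + ((q-1)/q^2) C(q/p, n/p) + ((q-1)/(2q)) (α(n) + (-1)^n β(n)), where α(n) = Σ_{i+pj=n, 0≤i≤√q} C(√q, i) C((q-√q)/p, j) and β(n) = Σ_{i+pj=n, i≥0} (-1)^j C(√q-1+i, √q-1) C((q+√q)/p, j). -/

import Mathlib

open PowerSeries Finset in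
lemma aux_prodRoots (p : ℕ) [Fact p.Prime] (hodd : Odd p) :
    ∏ c : ZMod p, (1 + C (ZMod.stdAddChar c : ℂ) * X : PowerSeries ℂ) = 1 + X ^ p := by
  classical
  have hp : p.Prime := Fact.out
  have hinj : Function.Injective (fun c : ZMod p => (C (ZMod.stdAddChar c : ℂ) : PowerSeries ℂ)) :=
    fun a b h => ZMod.injective_stdAddChar (PowerSeries.C_injective h)
  have hζ : IsPrimitiveRoot (C (Complex.exp (2 * Real.pi * Complex.I / p)) : PowerSeries ℂ) p :=
    (Complex.isPrimitiveRoot_exp p hp.ne_zero).map_of_injective (f := (C : ℂ →+* PowerSeries ℂ))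
      PowerSeries.C_injective
  have h := hζ.pow_add_pow_eq_prod_add_mul (1 : PowerSeries ℂ) X hodd
  have himg : (univ : Finset (ZMod p)).image
      (fun c : ZMod p => (C (ZMod.stdAddChar c : ℂ) : PowerSeries ℂ))
      = Polynomial.nthRootsFinset p (1 : PowerSeries ℂ) := by
    apply Finset.eq_of_subset_of_card_le
    · intro x hx
      obtain ⟨c, -, rfl⟩ := Finset.mem_image.1 hx
      rw [Polynomial.mem_nthRootsFinset hp.pos, ← map_pow, ← AddChar.map_nsmul_eq_pow]
      simp
    · rw [hζ.card_nthRootsFinset, Finset.card_image_of_injective _ hinj]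
      simp [ZMod.card]
  rw [one_pow] at h
  rw [h, ← himg, Finset.prod_image (fun a _ b _ hab => hinj hab)]

open PowerSeries Finset in
lemma aux_prodFiber (p : ℕ) [Fact p.Prime] (hodd : Odd p) {F : Type*} [Fintype F] (f : F → ZMod p)
    (M : ℕ) (hM : ∀ c : ZMod p, c ≠ 0 → (univ.filter (fun x => f x = c)).card = M) :
    (∏ x : F, (1 + C (ZMod.stdAddChar (f x) : ℂ) * X : PowerSeries ℂ)) * (1 + X) ^ M
      = (1 + X) ^ (univ.filter (fun x => f x = 0)).card * (1 + X ^ p) ^ M := by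
  classical
  rw [← Finset.prod_fiberwise univ f]
  have h1 : ∀ c : ZMod p, (∏ x ∈ univ with f x = c,
      (1 + C (ZMod.stdAddChar (f x) : ℂ) * X : PowerSeries ℂ))
      = (1 + C (ZMod.stdAddChar c : ℂ) * X) ^ (univ.filter (fun x => f x = c)).card := by
    intro c
    rw [← Finset.prod_const]
    exact Finset.prod_congr rfl fun x hx => by rw [(Finset.mem_filter.1 hx).2]
  simp_rw [h1]
  rw [← aux_prodRoots p hodd, ← Finset.mul_prod_erase univ _ (Finset.mem_univ (0 : ZMod p)),
    ← Finset.mul_prod_erase univ (fun c : ZMod p => (1 + C (ZMod.stdAddChar c : ℂ) * X : PowerSeries ℂ))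
      (Finset.mem_univ (0 : ZMod p)), mul_pow, ← Finset.prod_pow]
  rw [Finset.prod_congr rfl (fun c hc => by rw [hM c (Finset.ne_of_mem_erase hc)])]
  simp only [AddChar.map_zero_eq_one, map_one, one_mul]
  ring

open PowerSeries Finset in
lemma aux_sumFiber (p : ℕ) [Fact p.Prime] {F : Type*} [Fintype F] (f : F → ZMod p)
    (M : ℕ) (hM : ∀ c : ZMod p, c ≠ 0 → (univ.filter (fun x => f x = c)).card = M) :
    (∑ x : F, (ZMod.stdAddChar (f x) : ℂ)) = (univ.filter (fun x => f x = 0)).card - M := by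
  classical
  rw [← Finset.sum_fiberwise univ f]
  have h1 : ∀ c : ZMod p, (∑ x ∈ univ with f x = c, (ZMod.stdAddChar (f x) : ℂ))
      = (univ.filter (fun x => f x = c)).card * ZMod.stdAddChar c := by
    intro c
    rw [← nsmul_eq_mul, ← Finset.sum_const]
    exact Finset.sum_congr rfl fun x hx => by rw [(Finset.mem_filter.1 hx).2]
  simp_rw [h1]
  have h0 : ∑ c : ZMod p, (ZMod.stdAddChar c : ℂ) = 0 := by
    have := AddChar.sum_mulShift (1 : ZMod p) (ZMod.isPrimitive_stdAddChar p)
    simpa using this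
  rw [← Finset.add_sum_erase univ _ (Finset.mem_univ (0 : ZMod p))] at h0 ⊢
  rw [Finset.sum_congr rfl (fun c hc => by rw [hM c (Finset.ne_of_mem_erase hc)]),
    ← Finset.mul_sum]
  simp only [AddChar.map_zero_eq_one, mul_one] at h0 ⊢
  linear_combination (M : ℂ) * h0

open Finset in
lemma aux_cardFiber (p : ℕ) [Fact p.Prime] {F : Type*} [Fintype F] (f : F → ZMod p)
    (M : ℕ) (hM : ∀ c : ZMod p, c ≠ 0 → (univ.filter (fun x => f x = c)).card = M) :
    Fintype.card F + M = (univ.filter (fun x => f x = 0)).card + p * M := by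
  classical
  have h := Finset.card_eq_sum_card_fiberwise (f := f) (s := univ) (t := univ) (by simp)
  rw [← Finset.add_sum_erase univ _ (Finset.mem_univ (0 : ZMod p)),
    Finset.sum_congr rfl (fun c hc => hM c (Finset.ne_of_mem_erase hc)), Finset.sum_const,
    Finset.card_erase_of_mem (Finset.mem_univ _), Finset.card_univ, Finset.card_univ, ZMod.card] at h
  obtain ⟨k, hk⟩ : ∃ k, p = k + 1 := ⟨p - 1, by have := (Fact.out : p.Prime).pos; omega⟩
  rw [h]
  simp only [smul_eq_mul]
  have : p * M = (p - 1) * M + M := by rw [hk]; simp; ring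
  omega

open PowerSeries Finset in
lemma aux_coeffE {F : Type*} [Fintype F] (g : F → ℂ) (n : ℕ) :
    coeff n (∏ x : F, (1 + C (g x) * X : PowerSeries ℂ))
      = ∑ S ∈ powersetCard n univ, ∏ x ∈ S, g x := by
  classical
  rw [Finset.prod_one_add, map_sum]
  have : ∀ t : Finset F, coeff n (∏ i ∈ t, (C (g i) * X : PowerSeries ℂ))
      = if t.card = n then ∏ i ∈ t, g i else 0 := by
    intro t
    rw [Finset.prod_mul_distrib, ← map_prod, Finset.prod_const, coeff_C_mul, coeff_X_pow]
    by_cases h : t.card = n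
    · simp [h]
    · simp [h, Ne.symm h]
  simp_rw [this]
  rw [← Finset.sum_filter, Finset.powersetCard_eq_filter]

open PowerSeries Finset in
lemma aux_coeffPow (p M n : ℕ) (hp : 0 < p) :
    coeff n ((1 + X ^ p) ^ M : PowerSeries ℂ) = if p ∣ n then (M.choose (n / p) : ℂ) else 0 := by
  rw [add_comm, add_pow, map_sum]
  simp only [one_pow, mul_one, ← pow_mul]
  have : ∀ j, coeff n (X ^ (p * j) * (M.choose j : PowerSeries ℂ))
      = if n = p * j then (M.choose j : ℂ) else 0 := by
    intro j
    rw [← map_natCast (C : ℂ →+* PowerSeries ℂ), mul_comm, coeff_C_mul, coeff_X_pow]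
    simp
  simp_rw [this]
  split_ifs with h
  · obtain ⟨k, rfl⟩ := h
    rw [Nat.mul_div_cancel_left _ hp]
    have : ∀ j, (p * k = p * j) ↔ k = j := fun j => Nat.mul_right_inj hp.ne'
    simp only [this]
    rw [Finset.sum_ite_eq]
    split_ifs with h2
    · rfl
    · rw [Nat.choose_eq_zero_of_lt]; simp; simp at h2; omega
  · exact Finset.sum_eq_zero fun j _ => if_neg fun h' => h ⟨j, h'⟩

open PowerSeries Finset in
lemma aux_coeffMul (p M n : ℕ) (hp : 0 < p) (A : PowerSeries ℂ) :
    coeff n (A * (1 + X ^ p) ^ M)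
      = ∑ ij ∈ (Finset.range (n + 1) ×ˢ Finset.range (n + 1)).filter
          (fun ij => ij.1 + p * ij.2 = n), coeff ij.1 A * (M.choose ij.2 : ℂ) := by
  rw [coeff_mul]
  simp_rw [aux_coeffPow p M _ hp, mul_ite, mul_zero]
  rw [← Finset.sum_filter]
  symm
  apply Finset.sum_bij (fun ij _ => (ij.1, p * ij.2))
  · rintro ⟨i, j⟩ h
    simp at h ⊢
    exact h.2
  · rintro ⟨i, j⟩ h ⟨i', j'⟩ h' heq
    simp at heq ⊢
    omega
  · rintro ⟨i, k⟩ h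
    simp at h
    obtain ⟨h1, j, rfl⟩ := h
    refine ⟨(i, j), ?_, rfl⟩
    simp
    have : j ≤ p * j := Nat.le_mul_of_pos_left _ hp
    omega
  · rintro ⟨i, j⟩ h
    simp [Nat.mul_div_cancel_left _ hp]

open PowerSeries in
lemma aux_inv (s : ℕ) (hs : 0 < s) :
    (1 + X : PowerSeries ℂ) ^ s * PowerSeries.mk (fun i => (-1 : ℂ) ^ i * ((s - 1 + i).choose (s - 1) : ℂ)) = 1 := by
  have h := (invOneSubPow ℂ s).inv_val
  rw [invOneSubPow_val_eq_mk_sub_one_add_choose_of_pos _ _ hs] at h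
  have h2 : (1 - X : PowerSeries ℂ) ^ s * PowerSeries.mk (fun n => ((s - 1 + n).choose (s - 1) : ℂ)) = 1 := by
    obtain ⟨d, rfl⟩ : ∃ d, s = d + 1 := ⟨s - 1, by omega⟩
    exact h
  have h3 := congrArg (rescale (-1 : ℂ)) h2
  rw [map_mul, map_pow, map_sub, map_one, rescale_X, rescale_mk] at h3
  simpa using h3

open PowerSeries in
lemma aux_coeffOne (s i : ℕ) : coeff i ((1 + X : PowerSeries ℂ) ^ s) = (s.choose i : ℂ) := by
  have := aux_coeffPow 1 s i one_pos
  simpa using this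

lemma aux_square (p e : ℕ) [Fact p.Prime] (hodd : Odd p) {F : Type*} [Field F] [Fintype F]
    [Algebra (ZMod p) F] (hF : Fintype.card F = p ^ (2 * e)) (hchar : ringChar F ≠ 2)
    (c : ZMod p) (hc : c ≠ 0) : IsSquare (algebraMap (ZMod p) F c) := by
  rw [FiniteField.isSquare_iff hchar (by simpa using hc), ← map_pow, hF]
  have h1 : c ^ (p - 1) = 1 := ZMod.pow_card_sub_one_eq_one hc
  have h2 : (p - 1) ∣ p ^ (2 * e) / 2 := by
    obtain ⟨k, hk⟩ : (p - 1) ∣ p ^ e - 1 := by simpa using Nat.sub_dvd_pow_sub_pow p 1 e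
    have hs : Odd (p ^ e) := hodd.pow
    obtain ⟨m, hm⟩ := hs
    have h3 : p ^ (2 * e) = 2 * ((p ^ e - 1) * (m + 1)) + 1 := by
      rw [mul_comm 2 e, pow_mul, hm]; simp; ring
    rw [h3]
    have : (2 * ((p ^ e - 1) * (m + 1)) + 1) / 2 = (p ^ e - 1) * (m + 1) := by omega
    rw [this]
    exact Dvd.dvd.mul_right ⟨k, hk⟩ _
  obtain ⟨k, hk⟩ := h2
  rw [hk, pow_mul, h1, one_pow, map_one]

open Finset in
lemma aux_fiberQuad (p e : ℕ) [Fact p.Prime] (hodd : Odd p) {F : Type*} [Field F] [Fintype F]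
    [Algebra (ZMod p) F] (hF : Fintype.card F = p ^ (2 * e)) (hchar : ringChar F ≠ 2) (b : F)
    (c : ZMod p) (hc : c ≠ 0) :
    (univ.filter (fun x : F => Algebra.trace (ZMod p) F (b * x ^ 2) = c)).card
      = (univ.filter (fun x : F => Algebra.trace (ZMod p) F (b * x ^ 2) = 1)).card := by
  obtain ⟨y, hy⟩ := aux_square p e hodd hF hchar c hc
  have hy0 : y ≠ 0 := by
    rintro rfl
    simp at hy
    exact hc hy
  symm
  have key : ∀ x : F, Algebra.trace (ZMod p) F (b * (y * x) ^ 2)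
      = c * Algebra.trace (ZMod p) F (b * x ^ 2) := by
    intro x
    have : b * (y * x) ^ 2 = c • (b * x ^ 2) := by
      rw [Algebra.smul_def, hy]; ring
    rw [this, map_smul, smul_eq_mul]
  apply Finset.card_equiv (Equiv.mulLeft₀ y hy0)
  intro x
  simp only [mem_filter, mem_univ, true_and, Equiv.mulLeft₀_apply, key]
  constructor
  · intro h; rw [h, mul_one]
  · intro h; exact mul_left_cancel₀ hc (by rw [h, mul_one])

open Finset in
lemma aux_fiberLin (p : ℕ) [Fact p.Prime] {F : Type*} [Field F] [Fintype F]
    [Algebra (ZMod p) F] (a : F) (ha : a ≠ 0) (c : ZMod p) :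
    (univ.filter (fun x : F => Algebra.trace (ZMod p) F (a * x) = c)).card
      = (univ.filter (fun x : F => Algebra.trace (ZMod p) F (a * x) = 0)).card := by
  obtain ⟨d, hd⟩ := Algebra.trace_surjective (ZMod p) F c
  symm
  apply Finset.card_equiv (Equiv.addRight (a⁻¹ * d))
  intro x
  simp only [mem_filter, mem_univ, true_and, Equiv.coe_addRight, mul_add, map_add,
    mul_inv_cancel_left₀ ha, hd, add_eq_right]

noncomputable def auxPsi (p : ℕ) [Fact p.Prime] (F : Type*) [Field F] [Algebra (ZMod p) F] :
    AddChar F ℂ :=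
  (ZMod.stdAddChar (N := p)).compAddMonoidHom (Algebra.trace (ZMod p) F).toAddMonoidHom

lemma auxPsi_apply (p : ℕ) [Fact p.Prime] (F : Type*) [Field F] [Algebra (ZMod p) F] (x : F) :
    auxPsi p F x = ZMod.stdAddChar (Algebra.trace (ZMod p) F x) := rfl

lemma auxPsi_prim (p : ℕ) [Fact p.Prime] (F : Type*) [Field F] [Fintype F] [Algebra (ZMod p) F] :
    (auxPsi p F).IsPrimitive := by
  apply AddChar.IsPrimitive.of_ne_one
  obtain ⟨d, hd⟩ := Algebra.trace_surjective (ZMod p) F 1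
  rw [AddChar.ne_one_iff]
  refine ⟨d, ?_⟩
  rw [auxPsi_apply, hd]
  intro h
  rw [← AddChar.map_zero_eq_one (ZMod.stdAddChar (N := p))] at h
  exact one_ne_zero (ZMod.injective_stdAddChar h)

open Finset in
lemma aux_gauss (p e : ℕ) [Fact p.Prime] (hodd : Odd p) {F : Type*} [Field F] [Fintype F]
    [DecidableEq F]
    [Algebra (ZMod p) F] (hF : Fintype.card F = p ^ (2 * e)) (hchar : ringChar F ≠ 2) :
    ∃ ε : ℤ, (ε = 1 ∨ ε = -1) ∧ ∀ b : F, b ≠ 0 →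
      ∑ x : F, auxPsi p F (b * x ^ 2) = ((quadraticChar F b * ε : ℤ) : ℂ) * (p : ℂ) ^ e := by
  classical
  set ψ := auxPsi p F
  have hψ : ψ.IsPrimitive := auxPsi_prim p F
  set χ : MulChar F ℂ := (quadraticChar F).ringHomComp (Int.castRingHom ℂ) with hχ
  have hχa : ∀ a, χ a = ((quadraticChar F a : ℤ) : ℂ) := fun a => rfl
  have hχ2 : χ.IsQuadratic := (quadraticChar_isQuadratic F).comp _
  have hχ1 : χ ≠ 1 := by
    obtain ⟨a, ha⟩ := quadraticChar_exists_neg_one hchar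
    intro h
    have h3 : a ≠ 0 := by rintro rfl; simp at ha
    have h2 := hχa a
    rw [ha, h, MulChar.one_apply h3.isUnit] at h2
    norm_num at h2
  have hneg : χ (-1) = 1 := by
    have := aux_square p e hodd hF hchar (-1) (by simp)
    rw [hχa, (quadraticChar_one_iff_isSquare (by simp)).2 (by simpa using this)]
    simp
  have hsq := gaussSum_sq hχ1 hχ2 hψ
  rw [hneg, one_mul, hF] at hsq
  have hG : ∀ b : F, b ≠ 0 → ∑ x : F, ψ (b * x ^ 2) = χ b * gaussSum χ ψ := by
    intro b hb
    have h1 := gaussSum_mulShift_eq χ ψ (Units.mk0 b hb)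
    rw [hχ2.inv] at h1
    simp only [Units.val_mk0] at h1
    rw [← h1, gaussSum]
    simp only [AddChar.mulShift_apply]
    rw [← Finset.sum_fiberwise univ (fun x : F => x ^ 2)]
    have h2 : ∀ y : F, (∑ x ∈ univ with x ^ 2 = y, ψ (b * x ^ 2)) = (χ y + 1) * ψ (b * y) := by
      intro y
      have h3 := quadraticChar_card_sqrts hchar y
      have h4 : ((univ.filter (fun x : F => x ^ 2 = y)).card : ℂ) = χ y + 1 := by
        rw [hχa]
        have h5 : (univ.filter (fun x : F => x ^ 2 = y)) = {x : F | x ^ 2 = y}.toFinset := by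
          ext; simp
        rw [h5]
        exact_mod_cast h3
      rw [← h4, ← nsmul_eq_mul, ← Finset.sum_const]
      exact Finset.sum_congr rfl fun x hx => by rw [(Finset.mem_filter.1 hx).2]
    simp_rw [h2, add_mul, one_mul]
    rw [Finset.sum_add_distrib]
    have h6 := AddChar.sum_mulShift b hψ
    simp_rw [mul_comm _ b] at h6
    rw [h6]
    simp [hb]
  have hpm : gaussSum χ ψ = (p : ℂ) ^ e ∨ gaussSum χ ψ = - (p : ℂ) ^ e := by
    apply sq_eq_sq_iff_eq_or_eq_neg.1
    rw [hsq]; push_cast; ring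
  rcases hpm with h | h
  · refine ⟨1, Or.inl rfl, fun b hb => ?_⟩
    rw [hG b hb, h, hχa]; simp
  · refine ⟨-1, Or.inr rfl, fun b hb => ?_⟩
    rw [hG b hb, h, hχa]; simp

open PowerSeries Finset in
lemma aux_quadPos (p e : ℕ) [Fact p.Prime] (hodd : Odd p) {F : Type*} [Field F] [Fintype F]
    [Algebra (ZMod p) F] (hF : Fintype.card F = p ^ (2 * e)) (hchar : ringChar F ≠ 2) (b : F)
    (h : ∑ x : F, auxPsi p F (b * x ^ 2) = (p : ℂ) ^ e) :
    ∏ x : F, (1 + C (auxPsi p F (b * x ^ 2)) * X : PowerSeries ℂ)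
      = (1 + X) ^ (p ^ e) * (1 + X ^ p) ^ ((p ^ (2 * e) - p ^ e) / p) := by
  have hM := aux_fiberQuad p e hodd hF hchar b
  have h1 := aux_prodFiber p hodd _ _ hM
  have h2 := aux_sumFiber p _ _ hM
  have h3 := aux_cardFiber p _ _ hM
  simp only [← auxPsi_apply] at h1 h2
  rw [h] at h2
  set M := (univ.filter (fun x : F => Algebra.trace (ZMod p) F (b * x ^ 2) = 1)).card
  set N := (univ.filter (fun x : F => Algebra.trace (ZMod p) F (b * x ^ 2) = 0)).card
  have h4 : N = p ^ e + M := by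
    have : (N : ℂ) = ((p ^ e + M : ℕ) : ℂ) := by push_cast; linear_combination -h2
    exact_mod_cast this
  have h5 : p ^ (2 * e) - p ^ e = p * M := by rw [← hF]; omega
  rw [h5, Nat.mul_div_cancel_left _ (Fact.out : p.Prime).pos]
  have h6 : (1 + X : PowerSeries ℂ) ^ M ≠ 0 := by
    apply pow_ne_zero
    intro h
    simpa using congrArg (coeff 0) h
  apply mul_right_cancel₀ h6
  rw [h1, h4, pow_add]; ring

open PowerSeries Finset in
lemma aux_quadNeg (p e : ℕ) [Fact p.Prime] (hodd : Odd p) {F : Type*} [Field F] [Fintype F]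
    [Algebra (ZMod p) F] (hF : Fintype.card F = p ^ (2 * e)) (hchar : ringChar F ≠ 2) (b : F)
    (h : ∑ x : F, auxPsi p F (b * x ^ 2) = - (p : ℂ) ^ e) :
    ∏ x : F, (1 + C (auxPsi p F (b * x ^ 2)) * X : PowerSeries ℂ)
      = PowerSeries.mk (fun i => (-1 : ℂ) ^ i * ((p ^ e - 1 + i).choose (p ^ e - 1) : ℂ))
        * (1 + X ^ p) ^ ((p ^ (2 * e) + p ^ e) / p) := by
  have hM := aux_fiberQuad p e hodd hF hchar b
  have h1 := aux_prodFiber p hodd _ _ hM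
  have h2 := aux_sumFiber p _ _ hM
  have h3 := aux_cardFiber p _ _ hM
  simp only [← auxPsi_apply] at h1 h2
  rw [h] at h2
  set M := (univ.filter (fun x : F => Algebra.trace (ZMod p) F (b * x ^ 2) = 1)).card
  set N := (univ.filter (fun x : F => Algebra.trace (ZMod p) F (b * x ^ 2) = 0)).card
  have h4 : M = p ^ e + N := by
    have : (M : ℂ) = ((p ^ e + N : ℕ) : ℂ) := by push_cast; linear_combination h2
    exact_mod_cast this
  have h5 : p ^ (2 * e) + p ^ e = p * M := by rw [← hF]; omega
  rw [h5, Nat.mul_div_cancel_left _ (Fact.out : p.Prime).pos]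
  have h6 : (1 + X : PowerSeries ℂ) ^ M ≠ 0 := by
    apply pow_ne_zero
    intro h
    simpa using congrArg (coeff 0) h
  have h7 := aux_inv (p ^ e) (pow_pos (Fact.out : p.Prime).pos e)
  apply mul_right_cancel₀ h6
  rw [h1]
  have h8 : (1 + X : PowerSeries ℂ) ^ M = (1 + X) ^ (p ^ e) * (1 + X) ^ N := by rw [← pow_add, ← h4]
  rw [h8]
  linear_combination (-(1 + X ^ p) ^ M * (1 + X) ^ N) * h7

open PowerSeries Finset in
lemma aux_lin (p : ℕ) [Fact p.Prime] (hodd : Odd p) {F : Type*} [Field F] [Fintype F]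
    [Algebra (ZMod p) F] (a : F) (ha : a ≠ 0) :
    ∏ x : F, (1 + C (auxPsi p F (a * x)) * X : PowerSeries ℂ)
      = (1 + X ^ p) ^ (Fintype.card F / p) := by
  have hM := fun (c : ZMod p) (_ : c ≠ 0) => aux_fiberLin p a ha c
  have h1 := aux_prodFiber p hodd _ _ hM
  have h3 := aux_cardFiber p _ _ hM
  simp only [← auxPsi_apply] at h1
  set N := (univ.filter (fun x : F => Algebra.trace (ZMod p) F (a * x) = 0)).card
  have h5 : Fintype.card F = p * N := by omega
  rw [h5, Nat.mul_div_cancel_left _ (Fact.out : p.Prime).pos]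
  have h6 : (1 + X : PowerSeries ℂ) ^ N ≠ 0 := by
    apply pow_ne_zero
    intro h
    simpa using congrArg (coeff 0) h
  apply mul_right_cancel₀ h6
  rw [h1]; ring

/-- The basic exponential sum attached to a function. -/
noncomputable def auxE (p n : ℕ) [Fact p.Prime] {F : Type*} [Field F] [Fintype F]
    [Algebra (ZMod p) F] (f : F → F) : ℂ :=
  PowerSeries.coeff n (∏ x : F, (1 + PowerSeries.C (auxPsi p F (f x)) * PowerSeries.X))

open Finset in
lemma auxE_eq (p n : ℕ) [Fact p.Prime] {F : Type*} [Field F] [Fintype F]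
    [Algebra (ZMod p) F] (f : F → F) :
    auxE p n f = ∑ S ∈ powersetCard n (univ : Finset F), auxPsi p F (∑ x ∈ S, f x) := by
  classical
  rw [auxE, aux_coeffE]
  refine Finset.sum_congr rfl fun S hS => ?_
  clear hS
  induction S using Finset.induction_on with
  | empty => simp
  | insert a s ha ih => rw [prod_insert ha, sum_insert ha, AddChar.map_add_eq_mul, ih]

open Finset in
lemma auxE_shift (p n : ℕ) [Fact p.Prime] {F : Type*} [Field F] [Fintype F]
    [Algebra (ZMod p) F] [CharP F p] (hpn : p ∣ n) (hchar : ringChar F ≠ 2) (a b : F) (hb : b ≠ 0) :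
    auxE p n (fun x => a * x + b * x ^ 2) = auxE p n (fun x : F => b * x ^ 2) := by
  have h2 : (2 : F) ≠ 0 := Ring.two_ne_zero hchar
  set d := a / (2 * b)
  have h1 : auxE p n (fun x : F => b * x ^ 2) = auxE p n (fun x : F => b * (x + d) ^ 2) := by
    unfold auxE
    congr 1
    exact (Equiv.prod_comp (Equiv.addRight d) (fun x : F =>
      (1 + PowerSeries.C (auxPsi p F (b * x ^ 2)) * PowerSeries.X))).symm
  rw [h1, auxE_eq, auxE_eq]
  refine Finset.sum_congr rfl fun S hS => ?_
  congr 1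
  have h3 : ∀ x : F, b * (x + d) ^ 2 = (a * x + b * x ^ 2) + b * d ^ 2 := by
    intro x
    have : 2 * b * d = a := by simp only [d]; field_simp
    linear_combination x * this
  simp_rw [h3]
  rw [Finset.sum_add_distrib (f := fun x : F => a * x + b * x ^ 2), Finset.sum_const, (Finset.mem_powersetCard.1 hS).2, nsmul_eq_mul,
    (CharP.cast_eq_zero_iff F p n).2 hpn]
  simp

open Finset in
lemma aux_count (p n : ℕ) [Fact p.Prime] {F : Type*} [Field F] [Fintype F]
    [Algebra (ZMod p) F] :
    (Nat.card {S : Finset F //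
        S.card = n ∧ (∑ x ∈ S, x) = 0 ∧ (∑ x ∈ S, x ^ 2) = 0} : ℂ) * (Fintype.card F : ℂ) ^ 2
      = ∑ b : F, ∑ a : F, auxE p n (fun x : F => a * x + b * x ^ 2) := by
  classical
  have hψ := auxPsi_prim p F
  simp_rw [auxE_eq]
  have h1 : ∀ b : F, ∑ a : F, ∑ S ∈ powersetCard n (univ : Finset F),
      auxPsi p F (∑ x ∈ S, (a * x + b * x ^ 2)) =
      ∑ S ∈ powersetCard n (univ : Finset F), ∑ a : F, auxPsi p F (∑ x ∈ S, (a * x + b * x ^ 2)) :=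
    fun b => Finset.sum_comm
  simp_rw [h1]
  rw [Finset.sum_comm]
  have h2 : ∀ S : Finset F, ∑ b : F, ∑ a : F, auxPsi p F (∑ x ∈ S, (a * x + b * x ^ 2))
      = if (∑ x ∈ S, x) = 0 ∧ (∑ x ∈ S, x ^ 2) = 0 then (Fintype.card F : ℂ) ^ 2 else 0 := by
    intro S
    simp_rw [Finset.sum_add_distrib, ← Finset.mul_sum, AddChar.map_add_eq_mul, ← Finset.sum_mul]
    have h3 : ∀ i : F, ∑ x ∈ S, i * x = i * ∑ x ∈ S, x := fun i => (Finset.mul_sum _ _ _).symm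
    simp_rw [h3]
    rw [← Finset.mul_sum, AddChar.sum_mulShift _ hψ, AddChar.sum_mulShift _ hψ]
    by_cases h : (∑ x ∈ S, x) = 0 <;> by_cases h' : (∑ x ∈ S, x ^ 2) = 0 <;> simp [h, h', sq]
  simp_rw [h2]
  rw [← Finset.sum_filter, Finset.sum_const, nsmul_eq_mul]
  congr 2
  rw [Nat.card_eq_fintype_card, Fintype.card_subtype]
  congr 1
  ext S
  simp [Finset.mem_powersetCard]

open PowerSeries Finset in
lemma aux_total (p e n : ℕ) [Fact p.Prime] (hodd : Odd p) {F : Type*} [Field F] [Fintype F]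
    [Algebra (ZMod p) F] [CharP F p] (hF : Fintype.card F = p ^ (2 * e)) (hchar : ringChar F ≠ 2)
    (hpn : p ∣ n) :
    ∑ b : F, ∑ a : F, auxE p n (fun x : F => a * x + b * x ^ 2)
      = ((Fintype.card F).choose n : ℂ)
        + ((Fintype.card F : ℂ) - 1) * ((Fintype.card F / p).choose (n / p) : ℂ)
        + (Fintype.card F : ℂ) * (((Fintype.card F : ℂ) - 1) / 2 *
          (coeff n ((1 + X) ^ (p ^ e) * (1 + X ^ p) ^ ((p ^ (2 * e) - p ^ e) / p) : PowerSeries ℂ)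
          + coeff n (PowerSeries.mk (fun i => (-1 : ℂ) ^ i * ((p ^ e - 1 + i).choose (p ^ e - 1) : ℂ))
            * (1 + X ^ p) ^ ((p ^ (2 * e) + p ^ e) / p) : PowerSeries ℂ))) := by
  classical
  have hp : p.Prime := Fact.out
  set A := coeff n ((1 + X) ^ (p ^ e) * (1 + X ^ p) ^ ((p ^ (2 * e) - p ^ e) / p) : PowerSeries ℂ)
    with hA
  set B := coeff n (PowerSeries.mk (fun i => (-1 : ℂ) ^ i * ((p ^ e - 1 + i).choose (p ^ e - 1) : ℂ))
            * (1 + X ^ p) ^ ((p ^ (2 * e) + p ^ e) / p) : PowerSeries ℂ) with hB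
  have hcard : ((univ : Finset F).erase 0).card = Fintype.card F - 1 := by
    rw [Finset.card_erase_of_mem (Finset.mem_univ _), Finset.card_univ]
  have hcardC : (((univ : Finset F).erase 0).card : ℂ) = (Fintype.card F : ℂ) - 1 := by
    rw [hcard, Nat.cast_sub Fintype.card_pos, Nat.cast_one]
  rw [← Finset.add_sum_erase univ _ (Finset.mem_univ (0 : F))]
  congr 1
  · rw [← Finset.add_sum_erase univ _ (Finset.mem_univ (0 : F))]
    congr 1
    · rw [auxE_eq]
      simp
    · rw [← hcardC, ← nsmul_eq_mul, ← Finset.sum_const]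
      refine Finset.sum_congr rfl fun a ha => ?_
      simp only [zero_mul, add_zero]
      rw [auxE, aux_lin p hodd a (Finset.ne_of_mem_erase ha), aux_coeffPow _ _ _ hp.pos, if_pos hpn]
  · obtain ⟨ε, hε, hG⟩ := aux_gauss p e hodd hF hchar
    have h1 : ∀ b ∈ (univ : Finset F).erase 0, ∑ a : F, auxE p n (fun x : F => a * x + b * x ^ 2)
        = (Fintype.card F : ℂ) * ((A + B) / 2 + ((quadraticChar F b : ℤ) : ℂ) * (ε * (A - B) / 2)) := by
      intro b hb
      have hb0 := Finset.ne_of_mem_erase hb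
      have hE : ∀ a : F, auxE p n (fun x : F => a * x + b * x ^ 2) = auxE p n (fun x : F => b * x ^ 2) :=
        fun a => auxE_shift p n hpn hchar a b hb0
      simp_rw [hE]
      rw [Finset.sum_const, Finset.card_univ, nsmul_eq_mul]
      congr 1
      have hg := hG b hb0
      have hpm : quadraticChar F b * ε = 1 ∨ quadraticChar F b * ε = -1 := by
        rcases quadraticChar_dichotomy hb0 with h | h <;> rcases hε with h' | h' <;> simp [h, h']
      have hcast : ((quadraticChar F b : ℤ) : ℂ) * (ε * (A - B) / 2)
          = ((quadraticChar F b * ε : ℤ) : ℂ) * ((A - B) / 2) := by push_cast; ring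
      rw [hcast]
      rcases hpm with h | h
      · rw [h] at hg ⊢
        rw [auxE, aux_quadPos p e hodd hF hchar b (by simpa using hg), ← hA]
        push_cast; ring
      · rw [h] at hg ⊢
        rw [auxE, aux_quadNeg p e hodd hF hchar b (by simpa using hg), ← hB]
        push_cast; ring
    rw [Finset.sum_congr rfl h1, ← Finset.mul_sum, Finset.sum_add_distrib, Finset.sum_const,
      nsmul_eq_mul, hcardC, ← Finset.sum_mul]
    have h0 : ∑ b ∈ (univ : Finset F).erase 0, ((quadraticChar F b : ℤ) : ℂ) = 0 := by
      have h := quadraticChar_sum_zero hchar (F := F)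
      rw [← Finset.add_sum_erase univ _ (Finset.mem_univ (0 : F))] at h
      simp only [MulChar.map_zero, zero_add] at h
      exact_mod_cast h
    rw [h0]
    ring

theorem stmt_18 (p e q s n : ℕ) (hp : p.Prime) (hodd : Odd p) (he : 0 < e)
    (hq : q = p ^ (2 * e)) (hs : s = p ^ e)
    (F : Type*) [Field F] [Fintype F] (hF : Fintype.card F = q)
    (hn1 : 1 ≤ n) (hnq : n ≤ q) (hpn : p ∣ n) :
    (Nat.card {S : Finset F //
        S.card = n ∧ (∑ x ∈ S, x) = 0 ∧ (∑ x ∈ S, x ^ 2) = 0} : ℚ)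
      = (1 / (q : ℚ) ^ 2) * (q.choose n)
        + (((q : ℚ) - 1) / (q : ℚ) ^ 2) * ((q / p).choose (n / p))
        + (((q : ℚ) - 1) / (2 * (q : ℚ))) *
          ((∑ ij ∈ (Finset.range (n + 1) ×ˢ Finset.range (n + 1)).filter
              (fun ij => ij.1 + p * ij.2 = n ∧ ij.1 ≤ s),
            ((s.choose ij.1 : ℚ) * (((q - s) / p).choose ij.2 : ℚ)))
          + (-1 : ℚ) ^ n *
            ∑ ij ∈ (Finset.range (n + 1) ×ˢ Finset.range (n + 1)).filter
                (fun ij => ij.1 + p * ij.2 = n),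
              (-1 : ℚ) ^ ij.2 * ((s - 1 + ij.1).choose (s - 1) : ℚ)
                * (((q + s) / p).choose ij.2 : ℚ)) := by
  haveI : Fact p.Prime := ⟨hp⟩
  have hF' : Fintype.card F = p ^ (2 * e) := by rw [hF, hq]
  haveI : CharP F p := charP_of_card_eq_prime_pow hF'
  letI : Algebra (ZMod p) F := ZMod.algebra F p
  have hchar : ringChar F ≠ 2 := by
    rw [ringChar.eq F p]
    rintro rfl
    exact absurd hodd (by decide)
  have hc := aux_count p n (F := F)
  rw [aux_total p e n hodd hF' hchar hpn, aux_coeffMul _ _ _ hp.pos, aux_coeffMul _ _ _ hp.pos,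
    ← hq, ← hs, hF] at hc
  simp only [aux_coeffOne, PowerSeries.coeff_mk] at hc
  have hα : ∑ ij ∈ (Finset.range (n + 1) ×ˢ Finset.range (n + 1)).filter
        (fun ij => ij.1 + p * ij.2 = n ∧ ij.1 ≤ s),
        ((s.choose ij.1 : ℚ) * (((q - s) / p).choose ij.2 : ℚ))
      = ∑ ij ∈ (Finset.range (n + 1) ×ˢ Finset.range (n + 1)).filter
        (fun ij => ij.1 + p * ij.2 = n),
        ((s.choose ij.1 : ℚ) * (((q - s) / p).choose ij.2 : ℚ)) := by
    apply Finset.sum_subset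
    · intro x hx
      simp only [Finset.mem_filter] at hx ⊢
      exact ⟨hx.1, hx.2.1⟩
    · intro x hx hx'
      simp only [Finset.mem_filter] at hx hx'
      have : s < x.1 := by
        by_contra hcon
        exact hx' ⟨hx.1, hx.2, by omega⟩
      rw [Nat.choose_eq_zero_of_lt this]
      simp
  have hβ : (-1 : ℚ) ^ n *
            ∑ ij ∈ (Finset.range (n + 1) ×ˢ Finset.range (n + 1)).filter
                (fun ij => ij.1 + p * ij.2 = n),
              (-1 : ℚ) ^ ij.2 * ((s - 1 + ij.1).choose (s - 1) : ℚ)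
                * (((q + s) / p).choose ij.2 : ℚ)
      = ∑ ij ∈ (Finset.range (n + 1) ×ˢ Finset.range (n + 1)).filter
                (fun ij => ij.1 + p * ij.2 = n),
              (-1 : ℚ) ^ ij.1 * ((s - 1 + ij.1).choose (s - 1) : ℚ)
                * (((q + s) / p).choose ij.2 : ℚ) := by
    rw [Finset.mul_sum]
    refine Finset.sum_congr rfl fun x hx => ?_
    have hx2 := (Finset.mem_filter.1 hx).2
    have hsign : (-1 : ℚ) ^ n * (-1 : ℚ) ^ x.2 = (-1 : ℚ) ^ x.1 := by
      rw [← hx2, pow_add, pow_mul, hodd.neg_one_pow, mul_assoc, ← mul_pow]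
      simp
    rw [← hsign]
    ring
  rw [hα, hβ]
  have hq0 : (q : ℚ) ≠ 0 := by
    rw [hq]
    exact_mod_cast (pow_pos hp.pos _).ne'
  set α := ∑ ij ∈ (Finset.range (n + 1) ×ˢ Finset.range (n + 1)).filter
        (fun ij => ij.1 + p * ij.2 = n),
        ((s.choose ij.1 : ℚ) * (((q - s) / p).choose ij.2 : ℚ)) with hαd
  set β := ∑ ij ∈ (Finset.range (n + 1) ×ˢ Finset.range (n + 1)).filter
                (fun ij => ij.1 + p * ij.2 = n),
              (-1 : ℚ) ^ ij.1 * ((s - 1 + ij.1).choose (s - 1) : ℚ)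
                * (((q + s) / p).choose ij.2 : ℚ) with hβd
  set N := Nat.card {S : Finset F //
        S.card = n ∧ (∑ x ∈ S, x) = 0 ∧ (∑ x ∈ S, x ^ 2) = 0}
  have hQ : (N : ℚ) * (q : ℚ) ^ 2 = (q.choose n : ℚ)
      + ((q : ℚ) - 1) * ((q / p).choose (n / p) : ℚ)
      + (q : ℚ) * (((q : ℚ) - 1) / 2 * (α + β)) := by
    have : (((N : ℚ) * (q : ℚ) ^ 2 : ℚ) : ℂ) = (((q.choose n : ℚ)
      + ((q : ℚ) - 1) * ((q / p).choose (n / p) : ℚ)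
      + (q : ℚ) * (((q : ℚ) - 1) / 2 * (α + β)) : ℚ) : ℂ) := by
      rw [hαd, hβd]
      push_cast
      exact hc
    exact_mod_cast this
  field_simp
  linear_combination 2 * hQ
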